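/- Let n ≥ 1 and let NC(2n) be the set of crossingless matchings of 2n points, i.e. noncrossing fixed-point-free involutions of Fin (2n). For d ∈ ℂ, let 𝒢_{2n}(d) be the square matrix indexed by NC(2n) with entries 𝒢_{2n}(d)_{a,b} = d^{κ(a,b)}, where κ(a,b) is half the number of orbits of the permutation a∘b on Fin (2n). Then 𝒢_{2n}(d) is invertible if and only if d is not equal to 2·cos(kπ/(m+1)) for any integers 1 ≤ k ≤ m ≤ n (equivalently, d ≠ q + q⁻¹ for every root of unity q of order at most n+1; equivalently, d is not a root of any Chebyshev polynomial of the second kind U_m with m ≤ n). -/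

import Mathlib

/-- Crossingless matchings of `2n` points: noncrossing fixed-point-free involutions
of `Fin (2n)`. -/
abbrev NoncrossingMatching (n : ℕ) : Type :=
  {σ : Equiv.Perm (Fin (2 * n)) //
    (∀ i, σ (σ i) = i) ∧ (∀ i, σ i ≠ i) ∧
    ¬∃ i j : Fin (2 * n), i < j ∧ j < σ i ∧ σ i < σ j}

noncomputable instance (n : ℕ) : Fintype (NoncrossingMatching n) :=
  Fintype.ofFinite _

noncomputable instance (n : ℕ) : DecidableEq (NoncrossingMatching n) :=
  Classical.decEq _

/-- `κ(a,b)`: the number of closed loops obtained by gluing the matching diagrams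
of `a` and `b`, which is half the number of orbits of the permutation `a ∘ b`
on `Fin (2n)`. -/
noncomputable def kappa {n : ℕ} (a b : NoncrossingMatching n) : ℕ :=
  Nat.card (MulAction.orbitRel.Quotient
    (Subgroup.zpowers (a.1 * b.1)) (Fin (2 * n))) / 2

/-!
The Temperley–Lieb generators `e i` act on the span `V` of the crossingless matchings and are
self-adjoint for the meander pairing. Let `V m` be the span of the matchings whose points from `2m`
on are joined in consecutive pairs. Since `e (2m)` maps `V (m + 1)` into `V m`, and since
`e i = e i * e (i + 1) * e i`, a vector in the radical of the pairing on `V (m + 1)` is killed by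
all `e i` with `i ≤ 2m`, provided that the pairing on `V m` is nondegenerate. Such a vector is fixed
by the Jones–Wenzl idempotent `q` on `m + 1` strands, which maps `V (m + 1)` onto the line through
`q r`, where `r` is the rainbow: any other matching has an arc among the first `m + 1` points. As
`e m` maps `q r` to a nonzero vector times `Δ (m + 1) / Δ m`, where `Δ m` is the value at `d` of the
Chebyshev polynomial `S_m`, the radical on `V (m + 1)` vanishes if and only if `Δ (m + 1) ≠ 0`.
-/

section Chebyshev

open Polynomial

/-- The value at `d` of the rescaled Chebyshev polynomial of the second kind `S_m`. It is the
value `Δ_m` of the closure of the Jones–Wenzl idempotent on `m` strands, also written `[m + 1]_q`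
where `d = q + q⁻¹`. -/
noncomputable def quantumDim {R : Type*} [CommRing R] (d : R) (m : ℕ) : R :=
  (Chebyshev.S R m).eval d

section Ring

variable {R : Type*} [CommRing R] (d : R)

theorem quantumDim_zero : quantumDim d 0 = 1 := by simp [quantumDim]

theorem quantumDim_one : quantumDim d 1 = d := by simp [quantumDim]

theorem quantumDim_add_two (m : ℕ) :
    quantumDim d (m + 2) = d * quantumDim d (m + 1) - quantumDim d m := by
  simp [quantumDim, Chebyshev.S_add_two]

theorem quantumDim_map {R' : Type*} [CommRing R'] (f : R →+* R') (m : ℕ) :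
    quantumDim (f d) m = f (quantumDim d m) := by
  rw [quantumDim, quantumDim, ← Chebyshev.map_S f, eval_map, eval₂_hom]

end Ring

theorem splits_chebyshev_U_real (m : ℕ) : (Chebyshev.U ℝ m).Splits := by
  rw [splits_iff_card_roots, Chebyshev.roots_U_real, ← Finset.card_def, Finset.card_image_of_injOn]
  · simp
  · exact (Finset.range m).nodup_map_iff_injOn.mp (Chebyshev.roots_U_real_nodup m)

theorem chebyshev_U_complex_eval_eq_zero_iff (m : ℕ) (z : ℂ) :
    (Chebyshev.U ℂ m).eval z = 0 ↔
      ∃ k < m, z = Complex.cos (((k : ℂ) + 1) * (Real.pi : ℂ) / ((m : ℂ) + 1)) := by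
  have hroots : (Chebyshev.U ℂ m).roots = (Chebyshev.U ℝ m).roots.map Complex.ofRealHom := by
    rw [← Chebyshev.map_U Complex.ofRealHom, (splits_chebyshev_U_real m).roots_map]
  have hne : Chebyshev.U ℂ m ≠ 0 := fun h => by
    have h1 := Chebyshev.U_eval_one ℂ m
    rw [h, eval_zero] at h1
    norm_cast at h1
  rw [← IsRoot.def, ← mem_roots hne, hroots, Chebyshev.roots_U_real]
  simp [eq_comm]

theorem quantumDim_complex_eq_zero_iff (m : ℕ) (d : ℂ) :
    quantumDim d m = 0 ↔
      ∃ k : ℕ, 1 ≤ k ∧ k ≤ m ∧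
        d = 2 * Complex.cos ((k : ℂ) * (Real.pi : ℂ) / ((m : ℂ) + 1)) := by
  have hU : quantumDim d m = (Chebyshev.U ℂ m).eval (d / 2) := by
    rw [quantumDim, ← Chebyshev.S_comp_two_mul_X, eval_comp]
    simp [mul_div_cancel₀]
  rw [hU, chebyshev_U_complex_eval_eq_zero_iff]
  simp only [div_eq_iff (two_ne_zero' ℂ), mul_comm _ (2 : ℂ)]
  constructor
  · rintro ⟨k, hk, h⟩
    exact ⟨k + 1, by omega, hk, by rw [h, Nat.cast_succ]⟩
  · rintro ⟨k, hk, hkm, h⟩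
    obtain ⟨k, rfl⟩ := Nat.exists_eq_add_of_le' hk
    exact ⟨k, hkm, by rw [h, Nat.cast_succ]⟩

end Chebyshev

section JonesWenzl

open MulOpposite

/-- The first `N` members of the sequence `e` satisfy the Temperley–Lieb relations with
loop parameter `d`. -/
structure IsTemperleyLieb {R A : Type*} [CommSemiring R] [Semiring A] [Algebra R A] (d : R) (N : ℕ)
    (e : ℕ → A) : Prop where
  mul_self : ∀ i < N, e i * e i = d • e i
  mul_succ_mul : ∀ i, i + 1 < N → e i * e (i + 1) * e i = e i
  succ_mul_mul : ∀ i, i + 1 < N → e (i + 1) * e i * e (i + 1) = e (i + 1)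
  commute : ∀ i j, i + 2 ≤ j → j < N → Commute (e i) (e j)

theorem IsTemperleyLieb.op {R A : Type*} [CommSemiring R] [Semiring A] [Algebra R A] {d : R} {N : ℕ}
    {e : ℕ → A} (he : IsTemperleyLieb d N e) : IsTemperleyLieb d N fun i => op (e i) where
  mul_self i hi := by rw [← op_mul, he.mul_self i hi, op_smul]
  mul_succ_mul i hi := by rw [← op_mul, ← op_mul, ← mul_assoc, he.mul_succ_mul i hi]
  succ_mul_mul i hi := by rw [← op_mul, ← op_mul, ← mul_assoc, he.succ_mul_mul i hi]
  commute i j hij hj := (he.commute i j hij hj).op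

variable {K A : Type*} [Field K] [Ring A] [Algebra K A]

/-- The Jones–Wenzl idempotents, built from a sequence `e` by Wenzl's recursion. The idempotent
`jonesWenzl d e k` involves `e 0, …, e (k - 1)`, so it lives on `k + 1` strands. It is meaningful
only if `quantumDim d i ≠ 0` for `i ≤ k`, because of the division. -/
noncomputable def jonesWenzl (d : K) (e : ℕ → A) : ℕ → A
  | 0 => 1
  | k + 1 => jonesWenzl d e k -
      (quantumDim d k / quantumDim d (k + 1)) • (jonesWenzl d e k * e k * jonesWenzl d e k)

theorem jonesWenzl_op (d : K) (e : ℕ → A) (k : ℕ) :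
    jonesWenzl d (fun i => op (e i)) k = op (jonesWenzl d e k) := by
  induction k with
  | zero => rfl
  | succ k ih => simp only [jonesWenzl, ih, ← op_mul, ← op_smul, ← op_sub, mul_assoc]

variable {d : K} {N : ℕ} {e : ℕ → A} {k : ℕ}

theorem jonesWenzl_smul_eq_self {M : Type*} [AddCommGroup M] [Module A M] {x : M}
    (hx : ∀ i < k, e i • x = 0) : jonesWenzl d e k • x = x := by
  induction k with
  | zero => exact one_smul A x
  | succ k ih =>
    have hkx := ih fun i hi => hx i (by omega)
    rw [jonesWenzl, sub_smul, Algebra.smul_def, mul_smul, mul_smul, mul_smul, hkx,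
      hx k (by omega), smul_zero, smul_zero, sub_zero]

theorem jonesWenzl_mul_eq_self {x : A} (hx : ∀ i < k, e i * x = 0) : jonesWenzl d e k * x = x := by
  rw [← smul_eq_mul]
  exact jonesWenzl_smul_eq_self hx

namespace IsTemperleyLieb

theorem commute_jonesWenzl (he : IsTemperleyLieb d N e) {j : ℕ} (hkj : k < j) (hj : j < N) :
    Commute (jonesWenzl d e k) (e j) := by
  induction k with
  | zero => exact Commute.one_left _
  | succ k ih =>
    have hq : Commute (jonesWenzl d e k) (e j) := ih (by omega)
    exact hq.sub_left (((hq.mul_left (he.commute k j hkj hj)).mul_left hq).smul_left _)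

/-- Partial trace of a Jones–Wenzl idempotent. At `k = 0` the truncated index `k - 1` still gives
the right idempotent, namely `1`. -/
theorem mul_jonesWenzl_mul_of_isIdempotentElem (he : IsTemperleyLieb d N e) (hk : k < N)
    (hd : quantumDim d k ≠ 0) (hidem : IsIdempotentElem (jonesWenzl d e (k - 1))) :
    e k * jonesWenzl d e k * e k =
      (quantumDim d (k + 1) / quantumDim d k) • (jonesWenzl d e (k - 1) * e k) := by
  cases k with
  | zero => simp [jonesWenzl, quantumDim_zero, quantumDim_one, he.mul_self 0 hk]
  | succ k =>
    rw [Nat.add_sub_cancel] at hidem ⊢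
    have hcomm : jonesWenzl d e k * e (k + 1) = e (k + 1) * jonesWenzl d e k :=
      he.commute_jonesWenzl k.lt_succ_self hk
    rw [jonesWenzl]
    set q := jonesWenzl d e k
    have hloop : e (k + 1) * q * e (k + 1) = d • (q * e (k + 1)) := by
      rw [← hcomm, mul_assoc, he.mul_self _ hk, mul_smul_comm]
    have hzigzag : e (k + 1) * (q * e k * q) * e (k + 1) = q * e (k + 1) := by
      calc e (k + 1) * (q * e k * q) * e (k + 1)
          = (e (k + 1) * q) * e k * (q * e (k + 1)) := by simp only [mul_assoc]
        _ = (q * e (k + 1)) * e k * (e (k + 1) * q) := by rw [hcomm]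
        _ = q * (e (k + 1) * e k * e (k + 1)) * q := by simp only [mul_assoc]
        _ = q * (e (k + 1) * q) := by rw [he.succ_mul_mul k hk, mul_assoc]
        _ = q * e (k + 1) := by rw [← hcomm, ← mul_assoc, hidem.eq]
    rw [mul_sub, sub_mul, hloop, mul_smul_comm, smul_mul_assoc, hzigzag, ← sub_smul,
      quantumDim_add_two, sub_div, mul_div_cancel_right₀ d hd]

theorem mul_jonesWenzl_eq_zero (he : IsTemperleyLieb d N e) (hk : k ≤ N)
    (hd : ∀ i ≤ k, quantumDim d i ≠ 0) {i : ℕ} (hi : i < k) : e i * jonesWenzl d e k = 0 := by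
  induction k using Nat.strong_induction_on generalizing i with
  | h k ih =>
  obtain _ | k := k
  · omega
  have hkill : ∀ j ≤ k, ∀ i < j, e i * jonesWenzl d e j = 0 := fun j hj i hi =>
    ih j (by omega) (by omega) (fun l hl => hd l (by omega)) hi
  obtain hi | rfl := Nat.lt_succ_iff_lt_or_eq.1 hi
  · rw [jonesWenzl, mul_sub, mul_smul_comm, ← mul_assoc, ← mul_assoc, hkill k le_rfl i hi,
      zero_mul, zero_mul, smul_zero, sub_zero]
  have hidem : IsIdempotentElem (jonesWenzl d e (i - 1)) :=
    jonesWenzl_mul_eq_self (hkill (i - 1) (by omega))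
  have habsorb : jonesWenzl d e (i - 1) * jonesWenzl d e i = jonesWenzl d e i :=
    jonesWenzl_mul_eq_self fun j hj => hkill i le_rfl j (by omega)
  have hcomm : Commute (jonesWenzl d e (i - 1)) (e i) := by
    obtain rfl | hi := i.eq_zero_or_pos
    · exact Commute.one_left _
    · exact he.commute_jonesWenzl (by omega) (by omega)
  rw [jonesWenzl, mul_sub, mul_smul_comm, ← mul_assoc, ← mul_assoc,
    he.mul_jonesWenzl_mul_of_isIdempotentElem (by omega) (hd i (by omega)) hidem,
    smul_mul_assoc, smul_smul, div_mul_div_cancel₀ (hd _ le_rfl),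
    div_self (hd i (by omega)), one_smul, hcomm.eq, mul_assoc, habsorb, sub_self]

theorem jonesWenzl_mul_eq_zero (he : IsTemperleyLieb d N e) (hk : k ≤ N)
    (hd : ∀ i ≤ k, quantumDim d i ≠ 0) {i : ℕ} (hi : i < k) : jonesWenzl d e k * e i = 0 := by
  have h := he.op.mul_jonesWenzl_eq_zero hk hd hi
  rwa [jonesWenzl_op, ← op_mul, op_eq_zero_iff] at h

theorem isIdempotentElem_jonesWenzl (he : IsTemperleyLieb d N e) (hk : k ≤ N)
    (hd : ∀ i ≤ k, quantumDim d i ≠ 0) : IsIdempotentElem (jonesWenzl d e k) :=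
  jonesWenzl_mul_eq_self fun _ hi => he.mul_jonesWenzl_eq_zero hk hd hi

variable {M : Type*} [AddCommGroup M] [Module K M] [Module A M] [IsScalarTower K A M] {v : M}

theorem jonesWenzl_smul_eq_zero (he : IsTemperleyLieb d N e) (hd₀ : d ≠ 0) (hk : k ≤ N)
    (hd : ∀ i ≤ k, quantumDim d i ≠ 0) {i : ℕ} (hi : i < k) (hv : e i • v = d • v) :
    jonesWenzl d e k • v = 0 := by
  have h : d • jonesWenzl d e k • v = 0 := by
    rw [← smul_algebra_smul_comm, ← hv, smul_smul, he.jonesWenzl_mul_eq_zero hk hd hi, zero_smul]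
  exact (smul_eq_zero_iff_right hd₀).1 h

theorem smul_jonesWenzl_smul (he : IsTemperleyLieb d N e) (hd₀ : d ≠ 0) (hk : k < N)
    (hd : ∀ i ≤ k, quantumDim d i ≠ 0) (hv : e k • v = d • v) :
    e k • jonesWenzl d e k • v =
      (quantumDim d (k + 1) / quantumDim d k) • jonesWenzl d e (k - 1) • v := by
  have hidem := he.isIdempotentElem_jonesWenzl (k := k - 1) (by omega) fun i hi => hd i (by omega)
  have h := congrArg (· • v)
    (he.mul_jonesWenzl_mul_of_isIdempotentElem hk (hd k le_rfl) hidem)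
  simp only [smul_assoc, mul_smul, hv] at h
  simp only [smul_algebra_smul_comm d] at h
  exact smul_right_injective M hd₀ h

end IsTemperleyLieb

end JonesWenzl

section Orbits

open Equiv

variable {α β : Type*}

/-- The number of orbits of a permutation, fixed points included. -/
noncomputable def orbitCount (f : Perm α) : ℕ :=
  Nat.card (MulAction.orbitRel.Quotient (Subgroup.zpowers f) α)

theorem orbitRel_zpowers_iff {f : Perm α} {x y : α} :
    MulAction.orbitRel (Subgroup.zpowers f) α x y ↔ f.SameCycle x y := by
  rw [MulAction.orbitRel_apply, MulAction.mem_orbit_iff, Perm.sameCycle_comm]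
  exact Subgroup.exists_zpowers

theorem orbitCount_eq_card_sameCycle (f : Perm α) :
    orbitCount f = Nat.card (Quotient (Perm.SameCycle.setoid f)) :=
  Nat.card_congr (Quotient.congrRight fun _ _ => orbitRel_zpowers_iff)

theorem orbitCount_inv (f : Perm α) : orbitCount f⁻¹ = orbitCount f := by
  rw [orbitCount, Subgroup.zpowers_inv, orbitCount]

theorem sameCycle_map {f : Perm α} {g : Perm β} {φ : α → β}
    (h : ∀ x, g.SameCycle (φ x) (φ (f x))) {x y : α} (hxy : f.SameCycle x y) :
    g.SameCycle (φ x) (φ y) := by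
  have hstep (k : ℤ) : g.SameCycle (φ ((f ^ k) x)) (φ ((f ^ (k + 1)) x)) := by
    rw [add_comm, zpow_one_add]
    exact h _
  obtain ⟨k, rfl⟩ := hxy
  induction k with
  | zero => rfl
  | succ k ih => exact ih.trans (hstep k)
  | pred k ih => exact ih.trans (by simpa using (hstep (-k - 1)).symm)

variable [DecidableEq α] {f : Perm α} {x y z : α}

theorem swap_mul_apply_self : (swap x (f x) * f) x = x := by
  rw [Perm.mul_apply, swap_apply_right]

theorem swap_mul_apply_of_ne (hy : y ≠ x) :
    (swap x (f x) * f) y = Function.update id x (f x) (f y) := by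
  rw [Perm.mul_apply]
  obtain hyx | hyx := eq_or_ne (f y) x
  · rw [hyx, swap_apply_left, Function.update_self]
  · rw [swap_apply_of_ne_of_ne hyx (f.injective.ne hy), Function.update_of_ne hyx, id]

theorem sameCycle_update (y : α) : f.SameCycle y (Function.update id x (f x) y) := by
  obtain rfl | hy := eq_or_ne y x
  · rw [Function.update_self]
    exact (Perm.SameCycle.refl f y).apply_right
  · rw [Function.update_of_ne hy, id]

/-- Multiplying by `swap x (f x)` cuts `x` out of its orbit, in which `f x` can stand in for it. -/
theorem sameCycle_swap_mul_update_iff (hx : f x ≠ x) :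
    (swap x (f x) * f).SameCycle (Function.update id x (f x) y) (Function.update id x (f x) z) ↔
      f.SameCycle y z := by
  constructor
  · intro h
    have hyz : f.SameCycle (Function.update id x (f x) y) (Function.update id x (f x) z) := by
      refine sameCycle_map (φ := id) (fun w => ?_) h
      obtain rfl | hw := eq_or_ne w x
      · rw [swap_mul_apply_self]
      · rw [swap_mul_apply_of_ne hw]
        exact (Perm.SameCycle.refl f w).apply_right.trans (sameCycle_update _)
    exact ((sameCycle_update y).trans hyz).trans (sameCycle_update z).symm
  · refine sameCycle_map fun w => ?_
    obtain rfl | hw := eq_or_ne w x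
    · rw [Function.update_self, Function.update_of_ne hx, id]
    · rw [← swap_mul_apply_of_ne hw, Function.update_of_ne hw, id]
      exact (Perm.SameCycle.refl _ w).apply_right

theorem orbitCount_swap_mul [Finite α] (hx : f x ≠ x) :
    orbitCount (swap x (f x) * f) = orbitCount f + 1 := by
  let F : Option (Quotient (Perm.SameCycle.setoid f)) →
      Quotient (Perm.SameCycle.setoid (swap x (f x) * f)) :=
    fun o => o.elim ⟦x⟧ (Quotient.map (Function.update id x (f x)) fun _ _ =>
      (sameCycle_swap_mul_update_iff hx).2)
  have hfresh (y : α) :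
      ¬(swap x (f x) * f).SameCycle x (Function.update id x (f x) y) := fun h => by
    have hy := h.eq_of_left swap_mul_apply_self
    obtain rfl | hyx := eq_or_ne y x
    · exact hx (hy.trans (Function.update_self ..)).symm
    · exact hyx (hy.trans (Function.update_of_ne hyx ..)).symm
  have hF : F.Bijective := by
    constructor
    · rintro (_ | ⟨⟨y⟩⟩) (_ | ⟨⟨z⟩⟩) h
      · rfl
      · exact absurd (Quotient.exact h) (hfresh z)
      · exact absurd (Quotient.exact h).symm (hfresh y)
      · exact congrArg some
          (Quotient.sound ((sameCycle_swap_mul_update_iff hx).1 (Quotient.exact h)))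
    · rintro ⟨y⟩
      obtain rfl | hy := eq_or_ne y x
      · exact ⟨none, rfl⟩
      · exact ⟨some ⟦y⟧, congrArg (Quotient.mk _) (Function.update_of_ne hy ..)⟩
  rw [orbitCount_eq_card_sameCycle, orbitCount_eq_card_sameCycle, ← Nat.card_eq_of_bijective F hF,
    Finite.card_option]

end Orbits

section Matchings

open Equiv

variable {α : Type*}

/-- A fixed-point-free involution, viewed as a perfect matching. -/
structure IsMatching (σ : Perm α) : Prop where
  invol : ∀ x, σ (σ x) = x
  ne : ∀ x, σ x ≠ x

theorem IsMatching.inv_eq {σ : Perm α} (h : IsMatching σ) : σ⁻¹ = σ :=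
  inv_eq_of_mul_eq_one_left (Perm.ext h.invol)

theorem IsMatching.apply_eq_iff {σ : Perm α} (h : IsMatching σ) {x y : α} :
    σ x = y ↔ x = σ y := by
  rw [← Perm.eq_inv_iff_eq, h.inv_eq]

theorem pow_mul_apply_ne {a b : Perm α} (ha : IsMatching a) (hb : IsMatching b) (k : ℕ) (x : α) :
    ((a * b) ^ k) x ≠ a x := by
  induction k using Nat.twoStepInduction generalizing x with
  | zero => exact (ha.ne x).symm
  | one => simpa using hb.ne x
  | more k ih _ =>
    intro h
    apply ih ((a * b) x)
    rw [pow_succ', pow_succ] at h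
    simp only [Perm.mul_apply, a.injective.eq_iff, ha.invol] at h ⊢
    rw [← hb.invol (((a * b) ^ k) _), h]

/-- A loop of the glued diagram splits into two orbits of `a * b`, which `a` interchanges. -/
theorem two_le_orbitCount [Finite α] [Nonempty α] {a b : Perm α} (ha : IsMatching a)
    (hb : IsMatching b) : 2 ≤ orbitCount (a * b) := by
  obtain ⟨x⟩ := ‹Nonempty α›
  have : Nontrivial (Quotient (Perm.SameCycle.setoid (a * b))) :=
    ⟨⟦x⟧, ⟦a x⟧, fun h => by
      obtain ⟨k, hk⟩ := (Quotient.exact h : (a * b).SameCycle x (a x)).exists_nat_pow_eq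
      exact pow_mul_apply_ne ha hb k x hk⟩
  rw [orbitCount_eq_card_sameCycle]
  exact Finite.one_lt_card

variable [DecidableEq α]

/-- The matching obtained from `σ` by joining the points `u` and `v`, and joining their former
partners. It is encoded as a conjugate of `σ`, which makes it a matching for free. -/
def joinPair (σ : Perm α) (u v : α) : Perm α := swap v (σ u) * σ * swap v (σ u)

variable {σ : Perm α} {u v : α}

theorem isMatching_joinPair (h : IsMatching σ) (u v : α) : IsMatching (joinPair σ u v) where
  invol x := by simp [joinPair, h.invol]
  ne x hx := by
    simp only [joinPair, Perm.mul_apply, swap_apply_eq_iff] at hx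
    exact h.ne _ hx

theorem joinPair_apply (h : IsMatching σ) (huv : u ≠ v) (x : α) :
    joinPair σ u v x =
      if x = u then v else if x = v then u else if x = σ u then σ v
      else if x = σ v then σ u else σ x := by
  have := h.invol; have := h.ne
  simp only [joinPair, Perm.mul_apply, swap_apply_def]
  grind

theorem joinPair_eq_self (h : σ u = v) : joinPair σ u v = σ := by
  rw [joinPair, h, swap_self]
  rfl

theorem joinPair_apply_left (h : IsMatching σ) (huv : u ≠ v) : joinPair σ u v u = v := by
  rw [joinPair_apply h huv, if_pos rfl]

theorem joinPair_comm (h : IsMatching σ) (huv : u ≠ v) : joinPair σ u v = joinPair σ v u := by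
  ext x
  rw [joinPair_apply h huv, joinPair_apply h huv.symm]
  have := h.invol; have := h.ne
  grind

theorem joinPair_partners (h : IsMatching σ) (huv : u ≠ v) :
    joinPair σ (σ v) (σ u) = joinPair σ u v := by
  ext x
  rw [joinPair_apply h huv, joinPair_apply h (σ.injective.ne huv.symm)]
  have := h.invol; have := h.ne
  grind

theorem joinPair_joinPair_of_apply_eq (h : IsMatching σ) {w : α} (huv : σ u = v)
    (hvw : v ≠ w) (huw : u ≠ w) : joinPair (joinPair σ v w) u v = σ := by
  have hne : u ≠ v := fun h' => h.ne u (huv.trans h'.symm)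
  ext x
  simp only [joinPair_apply (isMatching_joinPair h v w) hne, joinPair_apply h hvw]
  have := h.invol; have := h.ne
  grind (splits := 20)

variable {s t : α}

theorem joinPair_joinPair_comm (h : IsMatching σ) (huv : u ≠ v) (hst : s ≠ t) (hus : u ≠ s)
    (hut : u ≠ t) (hvs : v ≠ s) (hvt : v ≠ t) :
    joinPair (joinPair σ u v) s t = joinPair (joinPair σ s t) u v := by
  ext x
  simp only [joinPair_apply (isMatching_joinPair h u v) hst,
    joinPair_apply (isMatching_joinPair h s t) huv, joinPair_apply h huv, joinPair_apply h hst]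
  have := h.invol; have := h.ne
  grind (splits := 40)

theorem joinPair_apply_eq_iff (h : IsMatching σ) (huv : u ≠ v) (hst : s ≠ t) (hus : u ≠ s)
    (hut : u ≠ t) (hvs : v ≠ s) (hvt : v ≠ t) :
    joinPair σ s t u = v ↔
      σ u = v ∨ (σ s = u ∧ σ t = v) ∨ (σ t = u ∧ σ s = v) := by
  rw [joinPair_apply h hst]
  have := h.invol; have := h.ne
  grind

/-- Joining `u` and `v` in `b` cuts each of them out of its orbit of `a * b`. -/
theorem orbitCount_mul_joinPair [Finite α] {a b : Perm α} (ha : IsMatching a) (hb : IsMatching b)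
    (hau : a u = v) (hbu : b u ≠ v) :
    orbitCount (a * joinPair b u v) = orbitCount (a * b) + 2 := by
  have hav : a v = u := ha.apply_eq_iff.2 hau.symm
  have hfu : (a * b) u ≠ u := fun h => hbu ((ha.apply_eq_iff.1 h).trans hau)
  have hfv : (a * b) v ≠ v := fun h =>
    hbu (hb.apply_eq_iff.1 ((ha.apply_eq_iff.1 h).trans hav)).symm
  have hgu : (swap v ((a * b) v) * (a * b)) u = (a * b) u :=
    swap_apply_of_ne_of_ne (fun h => hb.ne u ((ha.apply_eq_iff.1 h).trans hav))
      ((a * b).injective.ne (hau ▸ (ha.ne u).symm))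
  have hcut : a * joinPair b u v =
      swap u ((a * b) u) * (swap v ((a * b) v) * (a * b)) := by
    calc a * joinPair b u v = (a * swap v (b u)) * (b * swap v (b u)) := by
          simp only [joinPair, mul_assoc]
      _ = (swap u (a (b u)) * a) * (swap (b v) u * b) := by
          rw [mul_swap_eq_swap_mul, mul_swap_eq_swap_mul, hav, hb.invol]
      _ = swap u (a (b u)) * (a * swap u (b v)) * b := by
          rw [swap_comm (b v)]; simp only [mul_assoc]
      _ = swap u ((a * b) u) * (swap v ((a * b) v) * (a * b)) := by
          rw [mul_swap_eq_swap_mul, hau]; simp only [mul_assoc, Perm.mul_apply]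
  have hgu_ne : (swap v ((a * b) v) * (a * b)) u ≠ u := by rwa [hgu]
  rw [hcut, ← hgu, orbitCount_swap_mul hgu_ne, orbitCount_swap_mul hfv]

end Matchings

section Noncrossing

open Equiv

variable {α : Type*} [LinearOrder α] {σ : Perm α}

/-- No two arcs of the matching `σ` cross. -/
def IsNoncrossing (σ : Perm α) : Prop :=
  ¬∃ i j, i < j ∧ j < σ i ∧ σ i < σ j

theorem IsNoncrossing.apply_mem_Ioo_iff (h : IsMatching σ) (hσ : IsNoncrossing σ) {s x : α} :
    σ x ∈ Set.Ioo s (σ s) ↔ x ∈ Set.Ioo s (σ s) := by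
  have key {y} (hy : y ∈ Set.Ioo s (σ s)) : σ y ∈ Set.Ioo s (σ s) := by
    obtain ⟨hsy, hys⟩ := hy
    constructor
    · refine lt_of_not_ge fun hle => ?_
      have hlt : σ y < s := hle.lt_of_ne fun h' => hys.ne (h.apply_eq_iff.1 h')
      exact hσ ⟨σ y, s, hlt, by rwa [h.invol], by rwa [h.invol]⟩
    · refine lt_of_not_ge fun hle => ?_
      exact hσ ⟨s, y, hsy, hys, hle.lt_of_ne (σ.injective.ne hsy.ne)⟩
  exact ⟨fun hx => h.invol x ▸ key hx, key⟩

theorem IsNoncrossing.apply_mem_Ioo_iff_of_covBy (h : IsMatching σ) (hσ : IsNoncrossing σ)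
    {u v x : α} (huv : u ⋖ v) (hxu : x ≠ u) (hσv : x ≠ σ v) :
    σ u ∈ Set.Ioo x (σ x) ↔ σ v ∈ Set.Ioo x (σ x) := by
  have hlt {y : α} (hyu : y ≠ u) : y < u ↔ y < v :=
    ⟨fun hy => hy.trans huv.lt, fun hy => (huv.le_of_lt hy).lt_of_ne hyu⟩
  have hgt {y : α} (hyv : y ≠ v) : u < y ↔ v < y :=
    ⟨fun hy => (huv.ge_of_gt hy).lt_of_ne hyv.symm, huv.lt.trans⟩
  rw [hσ.apply_mem_Ioo_iff h, hσ.apply_mem_Ioo_iff h, Set.mem_Ioo, Set.mem_Ioo, hlt hxu,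
    hgt fun hx => hσv (h.apply_eq_iff.1 hx)]

theorem isNoncrossing_joinPair (h : IsMatching σ) (hσ : IsNoncrossing σ) {u v : α} (huv : u ⋖ v) :
    IsNoncrossing (joinPair σ u v) := by
  rintro ⟨i, j, hij, hji, hlt⟩
  have hτu : joinPair σ u v u = v := joinPair_apply_left h huv.ne
  have hτv : joinPair σ u v v = u := ((isMatching_joinPair h u v).apply_eq_iff.1 hτu).symm
  have hiu : i ≠ u := by rintro rfl; rw [hτu] at hji; exact huv.2 hij hji
  have hiv : i ≠ v := by rintro rfl; rw [hτv] at hji; exact huv.lt.asymm (hij.trans hji)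
  have hju : j ≠ u := by rintro rfl; rw [hτu] at hlt; exact huv.2 hji hlt
  have hjv : j ≠ v := by rintro rfl; rw [hτv] at hlt; exact huv.lt.asymm (hji.trans hlt)
  rw [joinPair_apply h huv.ne i, if_neg hiu, if_neg hiv] at hji hlt
  rw [joinPair_apply h huv.ne j, if_neg hju, if_neg hjv] at hlt
  have hi := hσ.apply_mem_Ioo_iff_of_covBy h huv hiu
  have hj := hσ.apply_mem_Ioo_iff_of_covBy h huv hju
  have hnot : ¬(j < σ i ∧ σ i < σ j) := fun ⟨h₁, h₂⟩ => hσ ⟨i, j, hij, h₁, h₂⟩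
  simp only [Set.mem_Ioo] at hi hj
  -- If `i` is a former partner, then the arc at `j` encloses just one of the two, and vice versa.
  grind

theorem exists_covBy_apply [Finite α] (h : IsMatching σ) (hσ : IsNoncrossing σ) {j : α}
    (hj : j < σ j) : ∃ i, j ≤ i ∧ i ⋖ σ i ∧ σ i ≤ σ j := by
  obtain ⟨i, ⟨hji, hi, hij⟩, hmax⟩ :=
    (Set.toFinite {i | j ≤ i ∧ i < σ i ∧ σ i ≤ σ j}).exists_maximal ⟨j, le_rfl, hj, le_rfl⟩
  refine ⟨i, hji, ⟨hi, fun c hic hci => ?_⟩, hij⟩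
  have hc := (hσ.apply_mem_Ioo_iff h).2 ⟨hic, hci⟩
  obtain hlt | hlt := (h.ne c).lt_or_gt
  · exact hc.1.not_ge (hmax ⟨hji.trans hc.1.le, by rwa [h.invol], by
      rw [h.invol]; exact (hci.trans_le hij).le⟩ hc.1.le)
  · exact hic.not_ge (hmax ⟨hji.trans hic.le, hlt, (hc.2.trans_le hij).le⟩ hic.le)

end Noncrossing

section CupCap

variable {n : ℕ}

theorem isMatching_coe (b : NoncrossingMatching n) : IsMatching b.1 :=
  ⟨b.2.1, b.2.2.1⟩

theorem isNoncrossing_coe (b : NoncrossingMatching n) : IsNoncrossing b.1 :=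
  b.2.2.2

/-- The matching `b` joins the adjacent points `i` and `i + 1`. -/
def HasArc (b : NoncrossingMatching n) (i : ℕ) : Prop :=
  ∃ h : i + 1 < 2 * n, b.1 ⟨i, by omega⟩ = ⟨i + 1, h⟩

/-- Stack a cap and a cup at the points `i` and `i + 1` on top of the matching `b`, ignoring the
loop this may create. Out of range, where `2 * n ≤ i + 1`, nothing happens. -/
def cupCap (i : ℕ) (b : NoncrossingMatching n) : NoncrossingMatching n :=
  if h : i + 1 < 2 * n then
    have hb : IsMatching (joinPair b.1 ⟨i, by omega⟩ ⟨i + 1, h⟩) :=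
      isMatching_joinPair (isMatching_coe b) ..
    ⟨joinPair b.1 ⟨i, by omega⟩ ⟨i + 1, h⟩, hb.invol, hb.ne,
      isNoncrossing_joinPair (isMatching_coe b) (isNoncrossing_coe b)
        (Fin.covBy_iff.2 (Nat.covBy_iff_add_one_eq.2 rfl))⟩
  else b

variable {b : NoncrossingMatching n} {i j : ℕ}

theorem cupCap_val (h : i + 1 < 2 * n) (b : NoncrossingMatching n) :
    (cupCap i b).1 = joinPair b.1 ⟨i, by omega⟩ ⟨i + 1, h⟩ := by
  rw [cupCap, dif_pos h]

theorem hasArc_iff (h : i + 1 < 2 * n) : HasArc b i ↔ b.1 ⟨i, by omega⟩ = ⟨i + 1, h⟩ :=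
  ⟨fun ⟨_, hb⟩ => hb, fun hb => ⟨h, hb⟩⟩

theorem hasArc_cupCap (h : i + 1 < 2 * n) (b : NoncrossingMatching n) : HasArc (cupCap i b) i := by
  rw [hasArc_iff h, cupCap_val h, joinPair_apply_left (isMatching_coe b) (by simp)]

theorem cupCap_eq_self (hb : HasArc b i) : cupCap i b = b := by
  obtain ⟨h, hb⟩ := hb
  exact Subtype.ext (by rw [cupCap_val h, joinPair_eq_self hb])

namespace HasArc

theorem apply_succ (hb : HasArc b i) (h : i + 1 < 2 * n) : b.1 ⟨i + 1, h⟩ = ⟨i, by omega⟩ := by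
  rw [(isMatching_coe b).apply_eq_iff, (hasArc_iff h).1 hb]

theorem not_succ (hb : HasArc b i) : ¬HasArc b (i + 1) := by
  rintro ⟨h, hb'⟩
  rw [hb.apply_succ (by omega), Fin.mk.injEq] at hb'
  omega

theorem cupCap_cupCap_succ (hb : HasArc b i) (h : i + 1 + 1 < 2 * n) :
    cupCap i (cupCap (i + 1) b) = b := by
  refine Subtype.ext ?_
  rw [cupCap_val (by omega), cupCap_val h]
  exact joinPair_joinPair_of_apply_eq (isMatching_coe b) hb.2 (by simp)
    (by simp; omega)

theorem cupCap_succ_cupCap (hb : HasArc b (i + 1)) : cupCap (i + 1) (cupCap i b) = b := by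
  have h := hb.1
  have hm := isMatching_coe b
  refine Subtype.ext ?_
  rw [cupCap_val h, cupCap_val (by omega), joinPair_comm (isMatching_joinPair hm ..) (by simp),
    joinPair_comm hm (by simp)]
  exact joinPair_joinPair_of_apply_eq hm (hb.apply_succ h) (by simp) (by simp; omega)

end HasArc

theorem cupCap_comm (hij : i + 2 ≤ j) (hj : j + 1 < 2 * n) (b : NoncrossingMatching n) :
    cupCap i (cupCap j b) = cupCap j (cupCap i b) := by
  refine Subtype.ext ?_
  rw [cupCap_val (by omega), cupCap_val hj, cupCap_val hj, cupCap_val (by omega)]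
  apply joinPair_joinPair_comm (isMatching_coe b) <;> simp <;> omega

theorem hasArc_cupCap_iff (hij : i + 1 < j ∨ j + 1 < i) (hi : i + 1 < 2 * n) (hj : j + 1 < 2 * n) :
    HasArc (cupCap i b) j ↔ HasArc b j ∨
      (b.1 ⟨i, by omega⟩ = ⟨j, by omega⟩ ∧ b.1 ⟨i + 1, hi⟩ = ⟨j + 1, hj⟩) ∨
      (b.1 ⟨i + 1, hi⟩ = ⟨j, by omega⟩ ∧ b.1 ⟨i, by omega⟩ = ⟨j + 1, hj⟩) := by
  rw [hasArc_iff hj, hasArc_iff hj, cupCap_val hi]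
  apply joinPair_apply_eq_iff (isMatching_coe b) <;> simp <;> omega

theorem HasArc.cupCap (hij : i + 1 < j ∨ j + 1 < i) (hb : HasArc b j) :
    HasArc (cupCap i b) j := by
  by_cases hi : i + 1 < 2 * n
  · exact (hasArc_cupCap_iff hij hi hb.1).2 (.inl hb)
  · rwa [_root_.cupCap, dif_neg hi]

theorem hasArc_cupCap_comm (hij : i + 1 < j) (hj : j + 1 < 2 * n) (hbi : ¬HasArc b i)
    (hbj : ¬HasArc b j) : HasArc (cupCap i b) j ↔ HasArc (cupCap j b) i := by
  have hb := isMatching_coe b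
  rw [hasArc_cupCap_iff (.inl hij) (by omega) hj, hasArc_cupCap_iff (.inr hij) hj (by omega),
    or_iff_right hbi, or_iff_right hbj]
  simp only [hb.apply_eq_iff (x := ⟨j, _⟩), hb.apply_eq_iff (x := ⟨j + 1, _⟩), eq_comm, and_comm]

open Classical in
/-- The factor contributed by stacking a cap and a cup at `i` on top of `b`: the loop parameter
`d` if a loop is closed up, that is, if `b` has an arc there, and `1` otherwise. -/
noncomputable def arcWeight {R : Type*} [One R] (d : R) (i : ℕ) (b : NoncrossingMatching n) : R :=
  if HasArc b i then d else 1

section ArcWeight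

variable {R : Type*}

theorem arcWeight_of_hasArc [One R] {d : R} (h : HasArc b i) : arcWeight d i b = d := if_pos h

theorem arcWeight_of_not_hasArc [One R] {d : R} (h : ¬HasArc b i) : arcWeight d i b = 1 := if_neg h

theorem arcWeight_mul_arcWeight_cupCap [CommMonoid R] {d : R} (hij : i + 2 ≤ j)
    (hj : j + 1 < 2 * n) (b : NoncrossingMatching n) :
    arcWeight d j b * arcWeight d i (cupCap j b) =
      arcWeight d i b * arcWeight d j (cupCap i b) := by
  by_cases hbi : HasArc b i <;> by_cases hbj : HasArc b j
  · rw [cupCap_eq_self hbi, cupCap_eq_self hbj, mul_comm]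
  · rw [cupCap_eq_self hbi, arcWeight_of_hasArc (hbi.cupCap (.inr hij)), arcWeight_of_hasArc hbi,
      mul_comm]
  · rw [cupCap_eq_self hbj, arcWeight_of_hasArc (hbj.cupCap (.inl hij)), arcWeight_of_hasArc hbj,
      mul_comm]
  · rw [arcWeight_of_not_hasArc hbi, arcWeight_of_not_hasArc hbj, one_mul, one_mul]
    classical simp only [arcWeight, hasArc_cupCap_comm hij hj hbi hbj]

end ArcWeight

end CupCap

section Kappa

variable {n : ℕ} {a b : NoncrossingMatching n} {i : ℕ}

theorem kappa_eq (a b : NoncrossingMatching n) : kappa a b = orbitCount (a.1 * b.1) / 2 := rfl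

theorem kappa_comm (a b : NoncrossingMatching n) : kappa a b = kappa b a := by
  rw [kappa_eq, kappa_eq, ← orbitCount_inv, mul_inv_rev, (isMatching_coe a).inv_eq,
    (isMatching_coe b).inv_eq]

theorem kappa_pos (hn : 0 < n) (a b : NoncrossingMatching n) : 0 < kappa a b := by
  have : Nonempty (Fin (2 * n)) := ⟨⟨0, by omega⟩⟩
  rw [kappa_eq]
  exact Nat.div_pos (two_le_orbitCount (isMatching_coe a)
    (isMatching_coe b)) two_pos

theorem kappa_cupCap (ha : HasArc a i) (hb : ¬HasArc b i) :
    kappa a (cupCap i b) = kappa a b + 1 := by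
  rw [kappa_eq, kappa_eq, cupCap_val ha.1, orbitCount_mul_joinPair
    (isMatching_coe a) (isMatching_coe b) ha.2
    (mt (hasArc_iff ha.1).2 hb), Nat.add_div_right _ two_pos]

theorem arcWeight_mul_pow_kappa_cupCap {R : Type*} [Monoid R] (d : R) (h : i + 1 < 2 * n)
    (a b : NoncrossingMatching n) :
    arcWeight d i a * d ^ kappa (cupCap i a) b = arcWeight d i b * d ^ kappa a (cupCap i b) := by
  by_cases ha : HasArc a i <;> by_cases hb : HasArc b i
  · rw [cupCap_eq_self ha, cupCap_eq_self hb, arcWeight_of_hasArc ha, arcWeight_of_hasArc hb]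
  · rw [cupCap_eq_self ha, kappa_cupCap ha hb, arcWeight_of_hasArc ha,
      arcWeight_of_not_hasArc hb, pow_succ', one_mul]
  · rw [cupCap_eq_self hb, kappa_comm, kappa_cupCap hb ha, arcWeight_of_not_hasArc ha,
      arcWeight_of_hasArc hb, kappa_comm b, pow_succ', one_mul]
  · have hab : kappa (cupCap i a) b + 1 = kappa a (cupCap i b) + 1 := by
      rw [← kappa_cupCap (hasArc_cupCap h a) hb, kappa_comm, kappa_cupCap (hasArc_cupCap h b) ha,
        kappa_comm]
    rw [arcWeight_of_not_hasArc ha, arcWeight_of_not_hasArc hb, Nat.succ_injective hab]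

end Kappa

section GramForm

variable {R : Type*} [CommRing R] {n : ℕ}

/-- The action of the `i`-th Temperley–Lieb generator on the span of crossingless matchings. -/
noncomputable def tlGen (n : ℕ) (d : R) (i : ℕ) : Module.End R (NoncrossingMatching n →₀ R) :=
  Finsupp.linearCombination R fun b => Finsupp.single (cupCap i b) (arcWeight d i b)

/-- The bilinear extension of the meander pairing. -/
noncomputable def gramForm (n : ℕ) (d : R) :
    (NoncrossingMatching n →₀ R) →ₗ[R] (NoncrossingMatching n →₀ R) →ₗ[R] R :=
  Finsupp.linearCombination R fun a => Finsupp.linearCombination R fun b => d ^ kappa a b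

variable (d : R) {i : ℕ}

theorem tlGen_single (b : NoncrossingMatching n) (c : R) :
    tlGen n d i (Finsupp.single b c) = Finsupp.single (cupCap i b) (c * arcWeight d i b) := by
  simp [tlGen]

theorem tlGen_single_of_hasArc {b : NoncrossingMatching n} (h : HasArc b i) (c : R) :
    tlGen n d i (Finsupp.single b c) = d • Finsupp.single b c := by
  rw [tlGen_single, cupCap_eq_self h, arcWeight_of_hasArc h, Finsupp.smul_single, smul_eq_mul,
    mul_comm]

theorem tlGen_single_of_not_hasArc {b : NoncrossingMatching n} (h : ¬HasArc b i) (c : R) :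
    tlGen n d i (Finsupp.single b c) = Finsupp.single (cupCap i b) c := by
  rw [tlGen_single, arcWeight_of_not_hasArc h, mul_one]

theorem isTemperleyLieb_tlGen (n : ℕ) (d : R) : IsTemperleyLieb d (2 * n - 1) (tlGen n d) where
  mul_self i hi := Finsupp.lhom_ext fun b c => by
    rw [Module.End.mul_apply, LinearMap.smul_apply, tlGen_single,
      tlGen_single_of_hasArc d (hasArc_cupCap (by omega) b)]
  mul_succ_mul i hi := Finsupp.lhom_ext fun b c => by
    have h := hasArc_cupCap (i := i) (by omega) b
    have h' := hasArc_cupCap (i := i + 1) (by omega) (cupCap i b)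
    rw [Module.End.mul_apply, Module.End.mul_apply, tlGen_single,
      tlGen_single_of_not_hasArc d h.not_succ,
      tlGen_single_of_not_hasArc d fun hi => hi.not_succ h', h.cupCap_cupCap_succ (by omega)]
  succ_mul_mul i hi := Finsupp.lhom_ext fun b c => by
    have h := hasArc_cupCap (i := i + 1) (by omega) b
    have h' := hasArc_cupCap (i := i) (by omega) (cupCap (i + 1) b)
    rw [Module.End.mul_apply, Module.End.mul_apply, tlGen_single,
      tlGen_single_of_not_hasArc d fun hi => hi.not_succ h,
      tlGen_single_of_not_hasArc d h'.not_succ, h.cupCap_succ_cupCap]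
  commute i j hij hj := Finsupp.lhom_ext fun b c => by
    simp only [Module.End.mul_apply, tlGen_single]
    rw [cupCap_comm hij (by omega), mul_assoc, mul_assoc,
      arcWeight_mul_arcWeight_cupCap hij (by omega)]

theorem gramForm_single_single (a b : NoncrossingMatching n) (x y : R) :
    gramForm n d (Finsupp.single a x) (Finsupp.single b y) = x * (y * d ^ kappa a b) := by
  simp [gramForm]

theorem toMatrix₂_gramForm :
    LinearMap.toMatrix₂ Finsupp.basisSingleOne Finsupp.basisSingleOne (gramForm n d) =
      Matrix.of fun a b => d ^ kappa a b := by
  ext a b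
  simp [LinearMap.toMatrix₂_apply, gramForm_single_single]

theorem isSelfAdjoint_tlGen (hi : i + 1 < 2 * n) :
    (gramForm n d).IsSelfAdjoint (tlGen n d i) :=
  LinearMap.isAdjointPair_iff_comp_eq_compl₂.2 <|
    Finsupp.lhom_ext fun a x => Finsupp.lhom_ext fun b y => by
      simp only [LinearMap.comp_apply, LinearMap.compl₂_apply, tlGen_single,
        gramForm_single_single]
      linear_combination x * y * arcWeight_mul_pow_kappa_cupCap d hi a b

theorem tlGen_apply_eq_zero (hi : i + 1 < 2 * n) {r : NoncrossingMatching n} (hr : ¬HasArc r i)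
    (x : NoncrossingMatching n →₀ R) : tlGen n d i x r = 0 := by
  have h : Finsupp.lapply r ∘ₗ tlGen n d i = 0 := Finsupp.lhom_ext fun b c => by
    rw [LinearMap.comp_apply, tlGen_single, Finsupp.lapply_apply, Finsupp.single_eq_of_ne]
    · rfl
    · rintro rfl
      exact hr (hasArc_cupCap hi b)
  exact LinearMap.congr_fun h x

end GramForm

section Tail

variable {n m i : ℕ}

/-- The points from `2 * m` on are joined in consecutive pairs by `b`. Such matchings are those of
`2 * m` points, all viewed in the same space. -/
def TailPaired (m : ℕ) (b : NoncrossingMatching n) : Prop :=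
  ∀ j, m ≤ j → j < n → HasArc b (2 * j)

namespace TailPaired

variable {b : NoncrossingMatching n}

theorem cupCap (hb : TailPaired m b) (hi : i + 1 < 2 * m) : TailPaired m (cupCap i b) :=
  fun j hj hjn => (hb j hj hjn).cupCap (.inl (by omega))

theorem of_hasArc (hb : TailPaired (m + 1) b) (h : HasArc b (2 * m)) : TailPaired m b := by
  intro j hj hjn
  obtain rfl | hj := hj.eq_or_lt
  · exact h
  · exact hb j hj hjn

end TailPaired

variable {R : Type*} [CommRing R]

/-- The span of the matchings joining the points from `2 * m` on in consecutive pairs. -/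
noncomputable def tailSpan (R : Type*) [CommRing R] (n m : ℕ) :
    Submodule R (NoncrossingMatching n →₀ R) :=
  Finsupp.supported R R {b | TailPaired m b}

theorem tailSpan_mono : Monotone (tailSpan R n) :=
  fun _ _ h => Finsupp.supported_mono fun _ hb j hj => hb j (h.trans hj)

theorem tailSpan_self : tailSpan R n n = ⊤ := by
  refine (congrArg _ (Set.eq_univ_of_forall fun b j h h' => ?_)).trans Finsupp.supported_univ
  exact absurd h h'.not_ge

theorem single_mem_tailSpan {b : NoncrossingMatching n} (h : TailPaired m b) (c : R) :
    Finsupp.single b c ∈ tailSpan R n m :=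
  Finsupp.single_mem_supported R c h

theorem tailSpan_le_iff (p : Submodule R (NoncrossingMatching n →₀ R)) :
    tailSpan R n m ≤ p ↔ ∀ b, TailPaired m b → Finsupp.single b 1 ∈ p := by
  rw [tailSpan, Finsupp.supported_eq_span_single, Submodule.span_le, Set.image_subset_iff]
  rfl

variable {d : R}

theorem tlGen_mem_tailSpan (hi : i + 1 < 2 * m) {x : NoncrossingMatching n →₀ R}
    (hx : x ∈ tailSpan R n m) : tlGen n d i x ∈ tailSpan R n m := by
  refine (tailSpan_le_iff ((tailSpan R n m).comap (tlGen n d i))).2 (fun b hb => ?_) hx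
  rw [Submodule.mem_comap, tlGen_single]
  exact single_mem_tailSpan (hb.cupCap hi) _

theorem tlGen_mem_tailSpan_of_mem_tailSpan_succ (hm : m < n) {x : NoncrossingMatching n →₀ R}
    (hx : x ∈ tailSpan R n (m + 1)) : tlGen n d (2 * m) x ∈ tailSpan R n m := by
  refine (tailSpan_le_iff ((tailSpan R n m).comap (tlGen n d (2 * m)))).2 (fun b hb => ?_) hx
  rw [Submodule.mem_comap, tlGen_single]
  exact single_mem_tailSpan
    ((hb.cupCap (by omega)).of_hasArc (hasArc_cupCap (by omega) b)) _

theorem tlGen_eq_smul_of_mem_tailSpan (hm : m < n) {x : NoncrossingMatching n →₀ R}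
    (hx : x ∈ tailSpan R n m) : tlGen n d (2 * m) x = d • x := by
  refine (tailSpan_le_iff (LinearMap.eqLocus (tlGen n d (2 * m)) (d • LinearMap.id))).2
    (fun b hb => ?_) hx
  rw [LinearMap.mem_eqLocus, tlGen_single_of_hasArc d (hb m le_rfl hm)]
  rfl

/-- The radical of the meander pairing restricted to `tailSpan R n m`. -/
noncomputable def tailRadical (n : ℕ) (d : R) (m : ℕ) : Submodule R (NoncrossingMatching n →₀ R) :=
  tailSpan R n m ⊓ (tailSpan R n m).orthogonalBilin (gramForm n d)

theorem mem_tailRadical_iff {x : NoncrossingMatching n →₀ R} :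
    x ∈ tailRadical n d m ↔
      x ∈ tailSpan R n m ∧ ∀ y ∈ tailSpan R n m, gramForm n d y x = 0 := Iff.rfl

theorem tlGen_mem_tailRadical (hm : m ≤ n) (hi : i + 1 < 2 * m) {x : NoncrossingMatching n →₀ R}
    (hx : x ∈ tailRadical n d m) : tlGen n d i x ∈ tailRadical n d m :=
  ⟨tlGen_mem_tailSpan hi hx.1, fun y hy => by
    refine (isSelfAdjoint_tlGen d (by omega) y x).symm.trans ?_
    exact hx.2 _ (tlGen_mem_tailSpan hi hy)⟩

theorem tlGen_mem_tailRadical_of_mem_tailRadical_succ (hm : m < n)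
    {x : NoncrossingMatching n →₀ R} (hx : x ∈ tailRadical n d (m + 1)) :
    tlGen n d (2 * m) x ∈ tailRadical n d m :=
  ⟨tlGen_mem_tailSpan_of_mem_tailSpan_succ hm hx.1, fun y hy =>
    (tlGen_mem_tailRadical hm (by omega) hx).2 y (tailSpan_mono m.le_succ hy)⟩

theorem tlGen_eq_zero_of_mem_tailRadical_succ (hm : m < n) (hrad : tailRadical n d m = ⊥)
    (hi : i ≤ 2 * m) {x : NoncrossingMatching n →₀ R} (hx : x ∈ tailRadical n d (m + 1)) :
    tlGen n d i x = 0 := by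
  induction hi using Nat.decreasingInduction generalizing x with
  | self =>
    rw [← Submodule.mem_bot R, ← hrad]
    exact tlGen_mem_tailRadical_of_mem_tailRadical_succ hm hx
  | of_succ i hi ih =>
    rw [← (isTemperleyLieb_tlGen n d).mul_succ_mul i (by omega), Module.End.mul_apply,
      Module.End.mul_apply, ih (tlGen_mem_tailRadical hm (by omega) hx), map_zero]

theorem tailRadical_le_succ [NoZeroDivisors R] (hd : d ≠ 0) (hm : m < n) :
    tailRadical n d m ≤ tailRadical n d (m + 1) := fun x hx =>
  ⟨tailSpan_mono m.le_succ hx.1, fun y hy => by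
    have h := hx.2 _ (tlGen_mem_tailSpan_of_mem_tailSpan_succ (d := d) hm hy)
    rw [isSelfAdjoint_tlGen d (by omega) y x,
      tlGen_eq_smul_of_mem_tailSpan hm hx.1, map_smul] at h
    exact (smul_eq_zero_iff_right hd).1 h⟩

end Tail

section Rainbow

variable {n m : ℕ}

/-- The matching joining `j` to `2 * m - 1 - j` for `j < 2 * m` and the points from `2 * m` on in
consecutive pairs. It indexes the only coordinate seen by the Jones–Wenzl idempotent on `m`
strands. -/
def rainbow (m : ℕ) (hm : m ≤ n) : NoncrossingMatching n :=
  have hlt (j : Fin (2 * n)) :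
      (if j.1 < 2 * m then 2 * m - 1 - j else if j.1 % 2 = 0 then j + 1 else j.1 - 1) < 2 * n := by
    have := j.2
    split_ifs <;> omega
  have hinv : Function.Involutive fun j : Fin (2 * n) => (⟨_, hlt j⟩ : Fin (2 * n)) := fun j => by
    ext
    simp only
    split_ifs <;> omega
  ⟨hinv.toPerm _, hinv, fun j h => by
    have := congrArg Fin.val h
    simp only [Function.Involutive.coe_toPerm] at this
    split_ifs at this <;> omega, by
    rintro ⟨i, j, h₁, h₂, h₃⟩
    simp only [Function.Involutive.coe_toPerm, Fin.lt_def] at h₁ h₂ h₃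
    split_ifs at h₂ h₃ <;> omega⟩

theorem rainbow_apply (hm : m ≤ n) (j : Fin (2 * n)) :
    ((rainbow m hm).1 j : ℕ) =
      if j.1 < 2 * m then 2 * m - 1 - j else if j.1 % 2 = 0 then j + 1 else j.1 - 1 :=
  rfl

theorem tailPaired_rainbow (hm : m ≤ n) : TailPaired m (rainbow m hm) := fun j hj hjn =>
  ⟨by omega, Fin.ext (by rw [rainbow_apply, if_neg (by simp; omega), if_pos (by simp)])⟩

theorem hasArc_rainbow_iff (hm : m ≤ n) {i : ℕ} (hi : i + 1 < 2 * m) :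
    HasArc (rainbow m hm) i ↔ i + 1 = m := by
  rw [hasArc_iff (by omega), Fin.ext_iff, rainbow_apply, if_pos (by simp; omega)]
  simp only
  omega

/-- A cup and a cap below the left half of a rainbow can be slid along its arcs to the right. -/
theorem cupCap_rainbow (hm : m ≤ n) {i : ℕ} (hi : i + 1 < 2 * m) :
    cupCap (2 * m - 2 - i) (rainbow m hm) = cupCap i (rainbow m hm) := by
  refine Subtype.ext ?_
  rw [cupCap_val (by omega), cupCap_val (by omega),
    ← joinPair_partners (isMatching_coe (rainbow m hm)) (by simp)]
  congr 1 <;> ext <;> rw [rainbow_apply, if_pos (by simp; omega)] <;> simp <;> omega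

variable {b : NoncrossingMatching n}

theorem TailPaired.apply_val (hb : TailPaired m b) {j : Fin (2 * n)} (hj : 2 * m ≤ j.1) :
    (b.1 j : ℕ) = if j.1 % 2 = 0 then j.1 + 1 else j.1 - 1 := by
  obtain ⟨j, hjn⟩ := j
  have harc := hb (j / 2) (by simp only at hj; omega) (by omega)
  obtain ⟨k, rfl | rfl⟩ := j.even_or_odd'
  · rw [Nat.mul_div_cancel_left k two_pos] at harc
    simp [(hasArc_iff (by omega)).1 harc]
  · rw [show (2 * k + 1) / 2 = k by omega] at harc
    simp [harc.apply_succ hjn]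

theorem TailPaired.apply_lt (hb : TailPaired m b) {j : Fin (2 * n)} (hj : j.1 < 2 * m) :
    (b.1 j).1 < 2 * m := by
  by_contra! hc
  have h := hb.apply_val hc
  rw [(isMatching_coe b).invol] at h
  split_ifs at h <;> omega

theorem le_apply_of_not_hasArc (h : ∀ i, i + 1 < m → ¬HasArc b i) {j : Fin (2 * n)}
    (hj : j.1 < m) : m ≤ (b.1 j).1 := by
  have hb := isMatching_coe b
  have key (k : Fin (2 * n)) (hk : k < b.1 k) : m ≤ (b.1 k).1 := by
    obtain ⟨i, -, hi, hik⟩ := exists_covBy_apply hb (isNoncrossing_coe b) hk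
    rw [Fin.covBy_iff, Nat.covBy_iff_add_one_eq] at hi
    by_contra! hkm
    rw [Fin.le_def] at hik
    exact h i (by omega) ⟨by omega, Fin.ext hi.symm⟩
  obtain hlt | hlt := (hb.ne j).lt_or_gt
  · have := key (b.1 j) (by rwa [hb.invol])
    rw [hb.invol] at this
    omega
  · exact key j hlt

theorem apply_lt_apply_of_not_hasArc (h : ∀ i, i + 1 < m → ¬HasArc b i) {i j : Fin (2 * n)}
    (hij : i < j) (hj : j.1 < m) : b.1 j < b.1 i := by
  have hi := le_apply_of_not_hasArc h (j := i) (by rw [Fin.lt_def] at hij; omega)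
  by_contra! hle
  exact isNoncrossing_coe b
    ⟨i, j, hij, by rw [Fin.lt_def]; omega, hle.lt_of_ne (b.1.injective.ne hij.ne)⟩

theorem TailPaired.apply_val_of_not_hasArc (hm : m ≤ n) (hb : TailPaired m b)
    (h : ∀ i, i + 1 < m → ¬HasArc b i) {j : Fin (2 * n)} (hj : j.1 < m) :
    (b.1 j : ℕ) = 2 * m - 1 - j := by
  -- Reflecting `b` gives a strictly increasing map of `Fin m` to itself.
  let f (k : Fin m) : Fin m := ⟨2 * m - 1 - b.1 ⟨k, by omega⟩, by
    have := le_apply_of_not_hasArc h (j := ⟨k, by omega⟩) k.2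
    omega⟩
  have hf : StrictMono f := fun k l hkl => by
    have hlt := apply_lt_apply_of_not_hasArc h (i := ⟨k, by omega⟩) (j := ⟨l, by omega⟩) hkl l.2
    have := hb.apply_lt (j := ⟨k, by omega⟩) (by simp only; omega)
    simp only [f, Fin.lt_def] at hlt ⊢
    omega
  have hfj : f ⟨j, hj⟩ = ⟨j, hj⟩ := le_antisymm hf.apply_le hf.le_apply
  have := hb.apply_lt (j := j) (by omega)
  simp only [f, Fin.mk.injEq, Fin.eta] at hfj
  omega

theorem eq_rainbow (hm : m ≤ n) (hb : TailPaired m b) (h : ∀ i, i + 1 < m → ¬HasArc b i) :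
    b = rainbow m hm := by
  refine Subtype.ext (Equiv.ext fun j => Fin.ext ?_)
  rw [rainbow_apply]
  split_ifs with hj hj'
  · by_cases hjm : j.1 < m
    · exact hb.apply_val_of_not_hasArc hm h hjm
    · have hval := hb.apply_val_of_not_hasArc hm h (j := ⟨2 * m - 1 - j, by omega⟩)
        (by simp only; omega)
      have hpartner : b.1 ⟨2 * m - 1 - j, by omega⟩ = j :=
        Fin.ext (by simp only at hval; omega)
      rw [← (isMatching_coe b).apply_eq_iff.1 hpartner]
  · rw [hb.apply_val (by omega), if_pos hj']
  · rw [hb.apply_val (by omega), if_neg hj']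

end Rainbow

section Nondegenerate

variable {K : Type*} [Field K] {n m : ℕ} {d : K}

theorem jonesWenzl_tlGen_apply {k : ℕ} (hk : k < 2 * n) {r : NoncrossingMatching n}
    (hr : ∀ i < k, ¬HasArc r i) (x : NoncrossingMatching n →₀ K) :
    jonesWenzl d (tlGen n d) k x r = x r := by
  induction k generalizing x with
  | zero => rfl
  | succ k ih =>
    have ih := ih (by omega) fun i hi => hr i (by omega)
    rw [jonesWenzl, LinearMap.sub_apply, LinearMap.smul_apply, Module.End.mul_apply,
      Module.End.mul_apply, Finsupp.sub_apply, Finsupp.smul_apply, ih, ih,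
      tlGen_apply_eq_zero d (by omega) (hr k (by omega)), smul_zero, sub_zero]

theorem jonesWenzl_tlGen_mem_tailSpan {k : ℕ} (hk : k < 2 * m)
    {x : NoncrossingMatching n →₀ K} (hx : x ∈ tailSpan K n m) :
    jonesWenzl d (tlGen n d) k x ∈ tailSpan K n m := by
  induction k generalizing x with
  | zero => exact hx
  | succ k ih =>
    have ih {y} := ih (x := y) (by omega)
    exact sub_mem (ih hx) (Submodule.smul_mem _ _ (ih (tlGen_mem_tailSpan (by omega) (ih hx))))

theorem mem_tailRadical_succ_of_tlGen_eq_zero (hd : d ≠ 0) (hm : m < n)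
    {x : NoncrossingMatching n →₀ K} (hx : x ∈ tailSpan K n (m + 1))
    (hzero : ∀ i ≤ 2 * m, tlGen n d i x = 0) : x ∈ tailRadical n d (m + 1) := by
  refine ⟨hx, fun y hy => ?_⟩
  refine (tailSpan_le_iff (LinearMap.ker ((gramForm n d).flip x))).2 (fun b hb => ?_) hy
  obtain ⟨i, hi, hbi⟩ : ∃ i ≤ 2 * m, HasArc b i := by
    by_contra! hc
    have hbr := eq_rainbow hm hb fun i hi => hc i (by omega)
    exact hc m (by omega) (hbr ▸ (hasArc_rainbow_iff hm (by omega)).2 rfl)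
  have h := isSelfAdjoint_tlGen d (by omega) (Finsupp.single b 1) x (i := i)
  rw [hzero i hi, map_zero, tlGen_single_of_hasArc d hbi, map_smul, LinearMap.smul_apply] at h
  exact (smul_eq_zero_iff_right hd).1 h

theorem jonesWenzl_tlGen_eq_smul (hd : d ≠ 0) (hm : m < n) (hq : ∀ i ≤ m, quantumDim d i ≠ 0)
    {y : NoncrossingMatching n →₀ K} (hy : y ∈ tailSpan K n (m + 1)) :
    jonesWenzl d (tlGen n d) m y = y (rainbow (m + 1) hm) •
      jonesWenzl d (tlGen n d) m (Finsupp.single (rainbow (m + 1) hm) 1) := by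
  set r := rainbow (m + 1) hm
  set q := jonesWenzl d (tlGen n d) m
  refine (tailSpan_le_iff (LinearMap.eqLocus q
    ((Finsupp.lapply r).smulRight (q (Finsupp.single r 1))))).2 (fun b hb => ?_) hy
  rw [LinearMap.mem_eqLocus, LinearMap.smulRight_apply, Finsupp.lapply_apply]
  by_cases hbr : b = r
  · rw [hbr, Finsupp.single_eq_same, one_smul]
  · rw [Finsupp.single_eq_of_ne (Ne.symm hbr), zero_smul]
    obtain ⟨i, hi, hbi⟩ : ∃ i, i + 1 < m + 1 ∧ HasArc b i := by
      by_contra! hc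
      exact hbr (eq_rainbow hm hb hc)
    exact (isTemperleyLieb_tlGen n d).jonesWenzl_smul_eq_zero
      (A := Module.End K (NoncrossingMatching n →₀ K)) (k := m)
      (v := Finsupp.single b (1 : K)) hd (by omega) hq (Nat.succ_lt_succ_iff.1 hi)
      (tlGen_single_of_hasArc d hbi 1)

theorem tlGen_jonesWenzl_rainbow (hd : d ≠ 0) (hm : m < n) (hq : ∀ i ≤ m, quantumDim d i ≠ 0) :
    tlGen n d m (jonesWenzl d (tlGen n d) m (Finsupp.single (rainbow (m + 1) hm) 1)) =
      (quantumDim d (m + 1) / quantumDim d m) •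
        jonesWenzl d (tlGen n d) (m - 1) (Finsupp.single (rainbow (m + 1) hm) 1) :=
  (isTemperleyLieb_tlGen n d).smul_jonesWenzl_smul
    (A := Module.End K (NoncrossingMatching n →₀ K)) (k := m)
    (v := Finsupp.single (rainbow (m + 1) hm) (1 : K)) hd (by omega) hq
    (tlGen_single_of_hasArc d ((hasArc_rainbow_iff hm (by omega)).2 rfl) 1)

theorem tlGen_jonesWenzl_rainbow_eq_zero (hd : d ≠ 0) (hm : m < n)
    (hq : ∀ i ≤ m, quantumDim d i ≠ 0) (hq₀ : quantumDim d (m + 1) = 0) {i : ℕ} (hi : i ≤ 2 * m) :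
    tlGen n d i (jonesWenzl d (tlGen n d) m (Finsupp.single (rainbow (m + 1) hm) 1)) = 0 := by
  have he := isTemperleyLieb_tlGen n d
  have hnot {j : ℕ} (hj : j ≤ 2 * m) (hjm : j ≠ m) : ¬HasArc (rainbow (m + 1) hm) j := by
    rwa [hasArc_rainbow_iff hm (i := j) (by omega), Nat.add_right_cancel_iff]
  obtain hlt | rfl | hgt := lt_trichotomy i m
  · rw [← Module.End.mul_apply, he.mul_jonesWenzl_eq_zero (by omega) hq hlt, LinearMap.zero_apply]
  · rw [tlGen_jonesWenzl_rainbow hd hm hq, hq₀, zero_div, zero_smul]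
  · have hslide : tlGen n d i (Finsupp.single (rainbow (m + 1) hm) 1) =
        tlGen n d (2 * m - i) (Finsupp.single (rainbow (m + 1) hm) 1) := by
      rw [tlGen_single_of_not_hasArc d (hnot hi hgt.ne'),
        tlGen_single_of_not_hasArc d (hnot (by omega) (by omega)), ← cupCap_rainbow hm (by omega)]
      rfl
    rw [← Module.End.mul_apply, ← (he.commute_jonesWenzl hgt (by omega)).eq, Module.End.mul_apply,
      hslide, ← Module.End.mul_apply, he.jonesWenzl_mul_eq_zero (by omega) hq (by omega),
      LinearMap.zero_apply]

theorem tailRadical_succ_eq_bot_iff (hd : d ≠ 0) (hm : m < n) (hrad : tailRadical n d m = ⊥)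
    (hq : ∀ i ≤ m, quantumDim d i ≠ 0) :
    tailRadical n d (m + 1) = ⊥ ↔ quantumDim d (m + 1) ≠ 0 := by
  set r := rainbow (m + 1) hm with hr
  have happly {k : ℕ} (hk : k ≤ m) : jonesWenzl d (tlGen n d) k (Finsupp.single r 1) r = 1 := by
    rw [jonesWenzl_tlGen_apply (by omega) fun i hi => ?_, Finsupp.single_eq_same]
    rw [hasArc_rainbow_iff hm (i := i) (by omega)]
    omega
  constructor
  · intro h hq₀
    have hmem := mem_tailRadical_succ_of_tlGen_eq_zero hd hm
      (jonesWenzl_tlGen_mem_tailSpan (k := m) (by omega)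
        (single_mem_tailSpan (tailPaired_rainbow hm) 1))
      fun i hi => tlGen_jonesWenzl_rainbow_eq_zero hd hm hq hq₀ hi
    rw [h, Submodule.mem_bot] at hmem
    exact one_ne_zero ((happly le_rfl).symm.trans (DFunLike.congr_fun hmem r))
  · refine fun hq₀ => (Submodule.eq_bot_iff _).2 fun x hx => ?_
    have hzero {i : ℕ} (hi : i ≤ 2 * m) : tlGen n d i x = 0 :=
      tlGen_eq_zero_of_mem_tailRadical_succ hm hrad hi hx
    have hqx : jonesWenzl d (tlGen n d) m x = x :=
      jonesWenzl_smul_eq_self (e := tlGen n d) (x := x) fun i hi => hzero (i := i) (by omega)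
    have hxr : x = x r • jonesWenzl d (tlGen n d) m (Finsupp.single r 1) :=
      hqx.symm.trans (jonesWenzl_tlGen_eq_smul hd hm hq hx.1)
    have hscalar : x r • (quantumDim d (m + 1) / quantumDim d m) = 0 := by
      have h := DFunLike.congr_fun (hzero (i := m) (by omega)) r
      rwa [hxr, map_smul, tlGen_jonesWenzl_rainbow hd hm hq, ← hr, Finsupp.smul_apply,
        Finsupp.smul_apply, happly (m.sub_le 1), smul_eq_mul _ (1 : K), mul_one] at h
    have hxr₀ : x r = 0 :=
      (smul_eq_zero.1 hscalar).resolve_right (div_ne_zero hq₀ (hq m le_rfl))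
    rw [hxr, hxr₀, zero_smul]

theorem tailRadical_zero (hd : d ≠ 0) : tailRadical n d 0 = ⊥ := by
  refine (Submodule.eq_bot_iff _).2 fun x hx => ?_
  set r := rainbow 0 n.zero_le
  have hsupp : tailSpan K n 0 ≤ Submodule.span K {Finsupp.single r 1} :=
    (tailSpan_le_iff _).2 fun b hb =>
      eq_rainbow n.zero_le hb (by simp) ▸ Submodule.mem_span_singleton_self _
  obtain ⟨c, rfl⟩ := Submodule.mem_span_singleton.1 (hsupp hx.1)
  have h := hx.2 _ (single_mem_tailSpan (tailPaired_rainbow n.zero_le) 1)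
  rw [map_smul, gramForm_single_single, one_mul, one_mul] at h
  rw [(smul_eq_zero.1 h).resolve_right (pow_ne_zero _ hd), zero_smul]

theorem tailRadical_eq_bot_iff (hd : d ≠ 0) (hm : m ≤ n) :
    tailRadical n d m = ⊥ ↔ ∀ i ≤ m, quantumDim d i ≠ 0 := by
  induction m with
  | zero => simp [quantumDim_zero, tailRadical_zero hd]
  | succ m ih =>
    have ih := ih (by omega)
    have hstep : (∀ i ≤ m + 1, quantumDim d i ≠ 0) ↔
        (∀ i ≤ m, quantumDim d i ≠ 0) ∧ quantumDim d (m + 1) ≠ 0 := by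
      simp only [Nat.le_succ_iff, or_imp, forall_and, forall_eq]
    rw [hstep, ← ih]
    constructor
    · intro h
      have hrad : tailRadical n d m = ⊥ := eq_bot_mono (tailRadical_le_succ hd hm) h
      exact ⟨hrad, (tailRadical_succ_eq_bot_iff hd hm hrad (ih.1 hrad)).1 h⟩
    · rintro ⟨hrad, hq₀⟩
      exact (tailRadical_succ_eq_bot_iff hd hm hrad (ih.1 hrad)).2 hq₀

theorem tailRadical_self_eq_bot_iff :
    tailRadical n d n = ⊥ ↔
      IsUnit (Matrix.of fun a b : NoncrossingMatching n => d ^ kappa a b) := by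
  rw [← toMatrix₂_gramForm, Matrix.isUnit_iff_isUnit_det, isUnit_iff_ne_zero,
    ← LinearMap.separatingRight_iff_det_ne_zero, LinearMap.SeparatingRight, Submodule.eq_bot_iff]
  simp only [mem_tailRadical_iff, tailSpan_self, Submodule.mem_top, true_and, forall_true_left]

theorem isUnit_meander_matrix_iff_of_field (n : ℕ) (d : K) :
    IsUnit (Matrix.of fun a b : NoncrossingMatching n => d ^ kappa a b) ↔
      ∀ m ≤ n, quantumDim d m ≠ 0 := by
  obtain rfl | hn := n.eq_zero_or_pos
  · have hone : (Matrix.of fun a b : NoncrossingMatching 0 => d ^ kappa a b) = 1 := by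
      ext a b
      obtain rfl : a = b := Subtype.ext (Equiv.ext fun i => i.elim0)
      simp [kappa_eq, orbitCount]
    simp [hone, quantumDim_zero]
  obtain rfl | hd := eq_or_ne d 0
  · have hzero : (Matrix.of fun a b : NoncrossingMatching n => (0 : K) ^ kappa a b) = 0 := by
      ext a b
      simp [(kappa_pos hn a b).ne']
    have : Nonempty (NoncrossingMatching n) := ⟨rainbow n le_rfl⟩
    rw [hzero, isUnit_zero_iff]
    exact iff_of_false zero_ne_one fun h => h 1 hn (quantumDim_one 0)
  · rw [← tailRadical_self_eq_bot_iff, tailRadical_eq_bot_iff hd le_rfl]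

end Nondegenerate

section CommRing

variable {R : Type*} [CommRing R]

theorem isUnit_iff_forall_residueField_ne_zero (x : R) :
    IsUnit x ↔ ∀ (p : Ideal R) [p.IsPrime], algebraMap R p.ResidueField x ≠ 0 := by
  refine ⟨fun h p _ => (h.map _).ne_zero, fun h => ?_⟩
  by_contra hx
  obtain ⟨p, hp, hxp⟩ := exists_max_ideal_of_mem_nonunits hx
  have := hp.isPrime
  exact h p (p.algebraMap_residueField_eq_zero.2 hxp)

/-- Over a ring the Jones–Wenzl idempotents are not available, but invertibility can be tested in
the residue fields. -/
theorem meander_matrix_invertible_iff_general (n : ℕ) (d : R) :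
    IsUnit (Matrix.of fun a b : NoncrossingMatching n => d ^ kappa a b) ↔
      ∀ m ≤ n, IsUnit (quantumDim d m) := by
  have hfield (p : Ideal R) [p.IsPrime] :
      algebraMap R p.ResidueField (Matrix.of fun a b : NoncrossingMatching n => d ^ kappa a b).det
        ≠ 0 ↔ ∀ m ≤ n, algebraMap R p.ResidueField (quantumDim d m) ≠ 0 := by
    have hmap : (algebraMap R p.ResidueField).mapMatrix
          (Matrix.of fun a b : NoncrossingMatching n => d ^ kappa a b) =
        Matrix.of fun a b => algebraMap R p.ResidueField d ^ kappa a b := by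
      ext a b
      simp
    rw [RingHom.map_det, hmap, ← isUnit_iff_ne_zero, ← Matrix.isUnit_iff_isUnit_det,
      isUnit_meander_matrix_iff_of_field]
    simp only [quantumDim_map]
  simp only [Matrix.isUnit_iff_isUnit_det, isUnit_iff_forall_residueField_ne_zero, hfield]
  exact ⟨fun h m hm p _ => h p m hm, fun h p _ m hm => h m hm p⟩

end CommRing

/-- The meander (Gram) matrix `𝒢_{2n}(d)` with entries `d^{κ(a,b)}`, indexed by
crossingless matchings of `2n` points, is invertible if and only if `d` is not of
the form `2 cos (kπ/(m+1))` with `1 ≤ k ≤ m ≤ n`. -/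
theorem meander_matrix_invertible_iff (n : ℕ) (hn : 1 ≤ n) (d : ℂ) :
    IsUnit (Matrix.of (fun a b : NoncrossingMatching n => d ^ kappa a b)) ↔
      ∀ m k : ℕ, 1 ≤ k → k ≤ m → m ≤ n →
        d ≠ 2 * Complex.cos ((k : ℂ) * (Real.pi : ℂ) / ((m : ℂ) + 1)) := by
  simp only [meander_matrix_invertible_iff_general, isUnit_iff_ne_zero, ne_eq,
    quantumDim_complex_eq_zero_iff, not_exists, not_and]
  exact ⟨fun h m k hk hkm hm => h m hm k hk hkm, fun h m hm k hk hkm => h m k hk hkm hm⟩
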